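/- (Operator Klamkin–McLenaghan type inequality.) Let Φ be a positive linear map from n×n to m×m complex matrices that moreover maps positive definite matrices to positive definite matrices, let f : ℝ → ℝ be operator monotone on [0,∞) with f(x) > 0 for x > 0, and let A, B be positive definite n×n complex matrices with s·A ≤ B ≤ t·A for some scalars 0 < s ≤ t with √(st) ≥ 1. Set C = Φ(f(A ! B)), D = Φ(f(√(st)·A)), E = Φ(f(B)), and T = C^{-1/2} D C^{-1/2}. Then C^{-1/2} E C^{-1/2} − C^{1/2} D^{-1} C^{1/2} ≤ ((√s+√t)²/2 − 2)·I − (T^{1/2} − T^{-1/2})². -/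

import Mathlib

open Matrix ComplexOrder

/-- Loewner order: `A ≤ B` iff `B - A` is positive semidefinite. -/
def LoewnerLE {n : Type} [Fintype n] (A B : Matrix n n ℂ) : Prop := (B - A).PosSemidef

/-- The positive square root of a (Hermitian) matrix, via the continuous functional calculus. -/
noncomputable def msqrt {n : Type} [Fintype n] [DecidableEq n] (A : Matrix n n ℂ) :
    Matrix n n ℂ := cfc Real.sqrt A

/-- The arithmetic mean `A ∇ B = (A + B)/2`. -/
noncomputable def amean {n : Type} [Fintype n] [DecidableEq n] (A B : Matrix n n ℂ) :
    Matrix n n ℂ := (2 : ℝ)⁻¹ • (A + B)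

/-- The harmonic mean `A ! B = ((A⁻¹ + B⁻¹)/2)⁻¹`. -/
noncomputable def hmean {n : Type} [Fintype n] [DecidableEq n] (A B : Matrix n n ℂ) :
    Matrix n n ℂ := ((2 : ℝ)⁻¹ • (A⁻¹ + B⁻¹))⁻¹

/-- The geometric mean `A ♯ B = A^(1/2) (A^(-1/2) B A^(-1/2))^(1/2) A^(1/2)`. -/
noncomputable def gmean {n : Type} [Fintype n] [DecidableEq n] (A B : Matrix n n ℂ) :
    Matrix n n ℂ := msqrt A * msqrt ((msqrt A)⁻¹ * B * (msqrt A)⁻¹) * msqrt A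

/-- `f : ℝ → ℝ` is operator monotone on `[0,∞)`: it is continuous and nonnegative on `[0,∞)`
and monotone on positive-semidefinite complex matrices of every finite size, with `f` applied
via the continuous functional calculus. -/
def OpMonotone (f : ℝ → ℝ) : Prop :=
  ContinuousOn f (Set.Ici 0) ∧ (∀ x : ℝ, 0 ≤ x → 0 ≤ f x) ∧
    ∀ (k : Type) [Fintype k] [DecidableEq k] (X Y : Matrix k k ℂ),
      X.PosSemidef → LoewnerLE X Y → LoewnerLE (cfc f X) (cfc f Y)

/-- `g : ℝ → ℝ` is operator monotone decreasing on `(0,∞)`: it is continuous and nonnegative on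
`(0,∞)` and antitone on positive-definite complex matrices of every finite size, with `g` applied
via the continuous functional calculus. -/
def OpAntitone (g : ℝ → ℝ) : Prop :=
  ContinuousOn g (Set.Ioi 0) ∧ (∀ x : ℝ, 0 < x → 0 ≤ g x) ∧
    ∀ (k : Type) [Fintype k] [DecidableEq k] (X Y : Matrix k k ℂ),
      X.PosDef → Y.PosDef → LoewnerLE X Y → LoewnerLE (cfc g Y) (cfc g X)

section KM

open scoped MatrixOrder

lemma km_contOn {n : Type} [Fintype n] [DecidableEq n] (X : Matrix n n ℂ) (f : ℝ → ℝ) :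
    ContinuousOn f (spectrum ℝ X) := by
  exact (X.finite_real_spectrum).continuousOn f

lemma km_intertwine_poly {k n : Type} [Fintype n] [DecidableEq n] [Fintype k] [DecidableEq k]
    (Z : Matrix k k ℂ) (X : Matrix n n ℂ) (V : Matrix k n ℂ) (h : Z * V = V * X)
    (p : Polynomial ℝ) : Polynomial.aeval Z p * V = V * Polynomial.aeval X p := by
  induction p using Polynomial.induction_on' with
  | add p q hp hq => simp [Matrix.add_mul, Matrix.mul_add, hp, hq]
  | monomial i a =>
    have : Z ^ i * V = V * X ^ i := by
      induction i with
      | zero => simp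
      | succ i ih =>
        rw [pow_succ, Matrix.mul_assoc, h, ← Matrix.mul_assoc, ih, Matrix.mul_assoc, ← pow_succ]
    simp [Polynomial.aeval_monomial, Algebra.algebraMap_eq_smul_one, this]

lemma km_intertwine {k n : Type} [Fintype n] [DecidableEq n] [Fintype k] [DecidableEq k]
    (f : ℝ → ℝ) (Z : Matrix k k ℂ) (X : Matrix n n ℂ) (hZ : Z.IsHermitian) (hX : X.IsHermitian)
    (V : Matrix k n ℂ) (h : Z * V = V * X) : cfc f Z * V = V * cfc f X := by
  classical
  let S : Finset ℝ := (Z.finite_real_spectrum.union X.finite_real_spectrum).toFinset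
  let p := Lagrange.interpolate S id f
  have hp : ∀ x ∈ S, p.eval x = f x := fun x hx =>
    Lagrange.eval_interpolate_at_node (s := S) (v := id) f (Set.injOn_id _) hx
  have e1 : cfc f Z = Polynomial.aeval Z p := by
    rw [← cfc_polynomial (R := ℝ) p Z hZ]
    exact cfc_congr fun x hx => (hp x (by simp [S, hx])).symm
  have e2 : cfc f X = Polynomial.aeval X p := by
    rw [← cfc_polynomial (R := ℝ) p X hX]
    exact cfc_congr fun x hx => (hp x (by simp [S, hx])).symm
  rw [e1, e2, km_intertwine_poly Z X V h]

lemma km_block {n : Type} [Fintype n] [DecidableEq n] (f : ℝ → ℝ) (hf : OpMonotone f)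
    (P Q R S : Matrix n n ℂ) (hZ : (fromBlocks P Q R S).PosSemidef) (d : ℝ) (hd : 0 < d) :
    (cfc f (((1 + d) • P)) - (cfc f (fromBlocks P Q R S)).toBlocks₁₁).PosSemidef := by
  have hP : P.PosSemidef := hZ.submatrix Sum.inl
  have hS : S.PosSemidef := hZ.submatrix Sum.inr
  set e : ℝ := Real.sqrt d
  have he : 0 < e := Real.sqrt_pos.2 hd
  have hee : e * e = d := Real.mul_self_sqrt hd.le
  have h1d : (0:ℝ) ≤ 1 + d := by positivity
  have h1d' : (0:ℝ) ≤ 1 + d⁻¹ := by positivity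
  set G : Matrix (n ⊕ n) (n ⊕ n) ℂ := fromBlocks ((1 + d) • P) 0 0 ((1 + d⁻¹) • S)
  have hG : G.IsHermitian :=
    IsHermitian.fromBlocks (hP.smul h1d).isHermitian (by simp) (hS.smul h1d').isHermitian
  have hle : LoewnerLE (fromBlocks P Q R S) G := by
    have := hZ.conjTranspose_mul_mul_same
      (fromBlocks (e • (1 : Matrix n n ℂ)) 0 0 ((-e⁻¹) • (1 : Matrix n n ℂ)))
    unfold LoewnerLE
    convert this using 1
    have : e⁻¹ * e⁻¹ = d⁻¹ := by rw [← mul_inv, hee]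
    simp only [G, fromBlocks_conjTranspose, fromBlocks_multiply, sub_eq_add_neg, fromBlocks_neg,
      fromBlocks_add, conjTranspose_smul, conjTranspose_one, conjTranspose_zero, star_trivial]
    simp [smul_smul, hee, this, he.ne', add_smul]
  have h := hf.2.2 (n ⊕ n) _ _ hZ hle
  have h2 := h.submatrix Sum.inl
  convert h2 using 1
  have hi : cfc f G * (fromRows 1 0 : Matrix (n ⊕ n) n ℂ) =
      (fromRows 1 0 : Matrix (n ⊕ n) n ℂ) * cfc f ((1 + d) • P) := by
    apply km_intertwine f G _ hG (hP.smul h1d).isHermitian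
    simp only [G, fromBlocks_mul_fromRows, fromRows_mul, Matrix.mul_one, Matrix.one_mul,
      Matrix.mul_zero, Matrix.zero_mul, add_zero]
  have hb : (cfc f G).toBlocks₁₁ = cfc f ((1 + d) • P) := by
    rw [← fromBlocks_toBlocks (cfc f G)] at hi
    rw [fromBlocks_mul_fromRows, fromRows_mul] at hi
    simpa using (fromRows_ext_iff _ _ _ _).1 hi |>.1
  rw [← hb]
  rfl

lemma km_jensen {n : Type} [Fintype n] [DecidableEq n] (f : ℝ → ℝ) (hf : OpMonotone f)
    (X Y : Matrix n n ℂ) (hX : X.PosSemidef) (hY : Y.PosSemidef) (c s : ℝ) (hcs : c * c + s * s = 1)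
    (d : ℝ) (hd : 0 < d) :
    (cfc f (((1 + d) • ((c * c) • X + (s * s) • Y)))
      - ((c * c) • cfc f X + (s * s) • cfc f Y)).PosSemidef := by
  let V : Matrix (n ⊕ n) n ℂ := fromRows (c • 1) (-s • 1)
  let W : Matrix (n ⊕ n) n ℂ := fromRows (s • 1) (c • 1)
  have key : ∀ P Q : Matrix n n ℂ, V * P * Vᴴ + W * Q * Wᴴ =
      fromBlocks ((c * c) • P + (s * s) • Q) ((c * s) • (Q - P)) ((c * s) • (Q - P))
        ((s * s) • P + (c * c) • Q) := by
    intro P Q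
    have h1 : V * P = fromRows (c • P) (-s • P) := by
      simp only [V, fromRows_mul, Matrix.smul_mul, Matrix.one_mul]
    have h2 : W * Q = fromRows (s • Q) (c • Q) := by
      simp only [W, fromRows_mul, Matrix.smul_mul, Matrix.one_mul]
    rw [h1, h2]
    simp only [V, W, conjTranspose_fromRows_eq_fromCols_conjTranspose,
      fromRows_mul_fromCols, fromBlocks_add, smul_sub, conjTranspose_smul,
      conjTranspose_one, star_trivial, Matrix.smul_mul, Matrix.mul_smul,
      Matrix.mul_one, smul_smul]
    rw [fromBlocks_inj]
    refine ⟨?_, ?_, ?_, ?_⟩ <;> module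
  set Z := V * X * Vᴴ + W * Y * Wᴴ with hZdef
  have hZ : Z.PosSemidef := (hX.mul_mul_conjTranspose_same V).add (hY.mul_mul_conjTranspose_same W)
  have hVV : Vᴴ * V = 1 := by
    simp [V, conjTranspose_fromRows_eq_fromCols_conjTranspose, fromCols_mul_fromRows, smul_smul,
      ← add_smul, hcs]
  have hWW : Wᴴ * W = 1 := by
    simp [W, conjTranspose_fromRows_eq_fromCols_conjTranspose, fromCols_mul_fromRows, smul_smul,
      ← add_smul, hcs, add_comm (s*s)]
  have hVW : Vᴴ * W = 0 := by
    simp [V, W, conjTranspose_fromRows_eq_fromCols_conjTranspose, fromCols_mul_fromRows, smul_smul,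
      mul_comm]
  have hWV : Wᴴ * V = 0 := by
    simp [V, W, conjTranspose_fromRows_eq_fromCols_conjTranspose, fromCols_mul_fromRows, smul_smul,
      mul_comm]
  have hone : V * Vᴴ + W * Wᴴ = 1 := by
    have := key 1 1
    simpa [← add_smul, hcs, add_comm (s*s)] using this
  have i1 : cfc f Z * V = V * cfc f X := km_intertwine f Z X hZ.1 hX.1 V (by
    rw [hZdef, Matrix.add_mul, Matrix.mul_assoc _ Vᴴ, Matrix.mul_assoc _ Wᴴ, hVV, hWV]; simp)
  have i2 : cfc f Z * W = W * cfc f Y := km_intertwine f Z Y hZ.1 hY.1 W (by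
    rw [hZdef, Matrix.add_mul, Matrix.mul_assoc _ Vᴴ, Matrix.mul_assoc _ Wᴴ, hVW, hWW]; simp)
  have e : cfc f Z = V * cfc f X * Vᴴ + W * cfc f Y * Wᴴ := by
    rw [← i1, ← i2, Matrix.mul_assoc, Matrix.mul_assoc, ← Matrix.mul_add, hone, Matrix.mul_one]
  rw [key] at e
  have hZ2 := key X Y
  rw [← hZdef] at hZ2
  rw [hZ2] at hZ e
  have := km_block f hf _ _ _ _ hZ d hd
  rw [e, toBlocks_fromBlocks₁₁] at this
  exact this

lemma km_cfc_psd {n : Type} [Fintype n] [DecidableEq n] (f : ℝ → ℝ)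
    (hf : ∀ x : ℝ, 0 ≤ x → 0 ≤ f x) (X : Matrix n n ℂ) (hX : X.PosSemidef) :
    (cfc f X).PosSemidef := by
  rw [← Matrix.nonneg_iff_posSemidef]
  exact cfc_nonneg fun x hx => hf x (spectrum_nonneg_of_nonneg hX.nonneg hx)

lemma km_cfc_pd {n : Type} [Fintype n] [DecidableEq n] (f : ℝ → ℝ)
    (hf : ∀ x : ℝ, 0 < x → 0 < f x) (X : Matrix n n ℂ) (hX : X.PosDef) :
    (cfc f X).PosDef := by
  rw [← Matrix.isStrictlyPositive_iff_posDef] at hX ⊢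
  have := hX.isSelfAdjoint
  rw [cfc_isStrictlyPositive_iff f X (km_contOn X f)]
  exact fun x hx => hf x (hX.spectrum_pos hx)

lemma km_comb {n : Type} [Fintype n] [DecidableEq n] (f : ℝ → ℝ) (hf : OpMonotone f)
    (X Y H : Matrix n n ℂ) (hX : X.PosSemidef) (hY : Y.PosSemidef) (κ : ℝ) (hκ : 1 ≤ κ)
    (hH : LoewnerLE ((2 : ℝ)⁻¹ • (X + Y)) (κ • H)) (d : ℝ) (hd : 0 < d) :
    ((2 * κ * (1 + d) ^ 2) • cfc f H - (cfc f X + cfc f Y)).PosSemidef := by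
  have r2 : Real.sqrt 2⁻¹ * Real.sqrt 2⁻¹ = 2⁻¹ := Real.mul_self_sqrt (by norm_num)
  have j1 := km_jensen f hf X Y hX hY (Real.sqrt 2⁻¹) (Real.sqrt 2⁻¹) (by rw [r2]; norm_num) d hd
  rw [r2] at j1
  set M1 := (1 + d) • ((2:ℝ)⁻¹ • X + (2:ℝ)⁻¹ • Y) with hM1
  have hM1p : M1.PosSemidef := by
    refine PosSemidef.smul (PosSemidef.add (hX.smul ?_) (hY.smul ?_)) ?_ <;> positivity
  have hκ0 : 0 < κ := by linarith
  set q : ℝ := ((1 + d) ^ 2 * κ)⁻¹ with hq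
  have hq0 : 0 < q := by positivity
  have hq1 : q ≤ 1 := inv_le_one_of_one_le₀ (by nlinarith)
  have j2 := km_jensen f hf M1 0 hM1p .zero (Real.sqrt q) (Real.sqrt (1 - q)) (by
    rw [Real.mul_self_sqrt hq0.le, Real.mul_self_sqrt (by linarith)]; ring) d hd
  rw [Real.mul_self_sqrt hq0.le, Real.mul_self_sqrt (by linarith)] at j2
  have h0 := (km_cfc_psd f hf.2.1 0 (.zero (n := n))).smul (sub_nonneg.2 hq1)
  have j3 := hf.2.2 n ((1 + d) • (q • M1 + (1 - q) • 0)) H (by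
    refine PosSemidef.smul (PosSemidef.add (hM1p.smul hq0.le) (by simpa using .zero)) ?_
    positivity) (by
    have := hH.smul (inv_nonneg.2 hκ0.le)
    unfold LoewnerLE
    convert this using 1
    have e : (1 + d) * (q * ((1 + d) * 2⁻¹)) = κ⁻¹ * 2⁻¹ := by
      rw [hq]; field_simp
    rw [hM1, smul_sub, smul_smul κ⁻¹ κ, inv_mul_cancel₀ hκ0.ne', one_smul, smul_zero, add_zero,
      ← smul_add, smul_smul, smul_smul, smul_smul, smul_smul, ← e]
    congr 2
    ring)
  have hs := ((j3.add j2).add h0).add (j1.smul hq0.le)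
  have hs2 := hs.smul (show 0 ≤ 2 * q⁻¹ by positivity)
  convert hs2 using 1
  have e2 : 2 * κ * (1 + d) ^ 2 = 2 * q⁻¹ := by rw [hq, inv_inv]; ring
  rw [e2]
  generalize cfc f ((1 + d) • (q • M1 + (1 - q) • 0)) = F
  match_scalars <;> field_simp <;> ring

lemma km_limit {n : Type} [Fintype n] (C G : Matrix n n ℂ) (k : ℝ)
    (h : ∀ d : ℝ, 0 < d → ((k * (1 + d) ^ 2) • C - G).PosSemidef) (hC : C.IsHermitian)
    (hG : G.IsHermitian) : (k • C - G).PosSemidef := by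
  refine .of_dotProduct_mulVec_nonneg ((hC.smul (IsSelfAdjoint.all k)).sub hG) fun x => ?_
  have h2 : ∀ d : ℝ, 0 < d → 0 ≤ star x ⬝ᵥ (((k * (1 + d) ^ 2) • C - G) *ᵥ x) :=
    fun d hd => (h d hd).dotProduct_mulVec_nonneg x
  have hc : Continuous fun d : ℝ => star x ⬝ᵥ (((k * (1 + d) ^ 2) • C - G) *ᵥ x) := by
    fun_prop
  have ht := (hc.tendsto 0).mono_left (nhdsWithin_le_nhds (s := Set.Ioi 0))
  have := ge_of_tendsto ht (Filter.eventually_of_mem self_mem_nhdsWithin fun d hd => h2 d hd)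
  simpa using this

lemma km_msqrt_pd {n : Type} [Fintype n] [DecidableEq n] (X : Matrix n n ℂ) (hX : X.PosDef) :
    (msqrt X).PosDef := km_cfc_pd Real.sqrt (fun _ hx => Real.sqrt_pos.2 hx) X hX

lemma km_msqrt_mul {n : Type} [Fintype n] [DecidableEq n] (X : Matrix n n ℂ) (hX : X.PosDef) :
    msqrt X * msqrt X = X := by
  have hsa : IsSelfAdjoint X := hX.isHermitian
  unfold msqrt
  rw [← cfc_mul Real.sqrt Real.sqrt X (km_contOn _ _) (km_contOn _ _)]
  conv_rhs => rw [← cfc_id ℝ X hsa]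
  exact cfc_congr fun x hx =>
    Real.mul_self_sqrt (spectrum_nonneg_of_nonneg hX.posSemidef.nonneg hx)

lemma km_inv {n : Type} [Fintype n] [DecidableEq n] {X : Matrix n n ℂ} (hX : X.PosDef) :
    X * X⁻¹ = 1 ∧ X⁻¹ * X = 1 := by
  have := (Matrix.isUnit_iff_isUnit_det X).1 hX.isUnit
  exact ⟨Matrix.mul_nonsing_inv X this, Matrix.nonsing_inv_mul X this⟩

lemma km_conj {n : Type} [Fintype n] {X S : Matrix n n ℂ} (hX : X.PosSemidef)
    (hS : S.IsHermitian) : (S * X * S).PosSemidef := by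
  have := hX.mul_mul_conjTranspose_same S
  rwa [hS.eq] at this

lemma km_conj_pd {n : Type} [Fintype n] [DecidableEq n] {X S : Matrix n n ℂ} (hX : X.PosDef)
    (hS : S.PosDef) : (S * X * S).PosDef := by
  have := (Matrix.IsUnit.posDef_star_right_conjugate_iff (x := X) hS.isUnit).2 hX
  rwa [star_eq_conjTranspose, hS.isHermitian.eq] at this

lemma km_hmean_pd {n : Type} [Fintype n] [DecidableEq n] (A B : Matrix n n ℂ)
    (hA : A.PosDef) (hB : B.PosDef) : (hmean A B).PosDef :=
  ((hA.inv.add hB.inv).smul (by norm_num : (0:ℝ) < 2⁻¹)).inv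

lemma km_hmean {n : Type} [Fintype n] [DecidableEq n] (A B : Matrix n n ℂ)
    (hA : A.PosDef) (hB : B.PosDef)
    (s t g : ℝ) (hs : 0 < s) (h1 : 1 ≤ g) (hg : g * g = s * t)
    (hsA : LoewnerLE (s • A) B) (htA : LoewnerLE B (t • A)) :
    LoewnerLE ((2 : ℝ)⁻¹ • (B + g • A)) (((s + t + 2 * g) / 4) • hmean A B) := by
  obtain ⟨S, hS, hSS⟩ : ∃ S : Matrix n n ℂ, S.PosDef ∧ S * S = A :=
    ⟨msqrt A, km_msqrt_pd A hA, km_msqrt_mul A hA⟩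
  obtain ⟨hi1, hi2⟩ := km_inv hS
  have hSi := hS.inv
  obtain ⟨b, hb⟩ : ∃ b, b = S⁻¹ * B * S⁻¹ := ⟨_, rfl⟩
  have hbp : b.PosDef := hb ▸ km_conj_pd hB hSi
  have hsa : IsSelfAdjoint b := hbp.isHermitian
  have hB' : S * b * S = B := by
    rw [hb]
    calc S * (S⁻¹ * B * S⁻¹) * S = (S * S⁻¹) * B * (S⁻¹ * S) := by noncomm_ring
      _ = B := by rw [hi1, hi2]; simp
  have hA' : S⁻¹ * A * S⁻¹ = 1 := by
    rw [← hSS]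
    calc S⁻¹ * (S * S) * S⁻¹ = (S⁻¹ * S) * (S * S⁻¹) := by noncomm_ring
      _ = 1 := by rw [hi1, hi2]; simp
  have hbs : ∀ x ∈ spectrum ℝ b, s ≤ x := by
    rw [← algebraMap_le_iff_le_spectrum (ha := hsa), Matrix.le_iff]
    have := km_conj hsA hSi.isHermitian
    rwa [Matrix.mul_sub, Matrix.sub_mul, ← hb, Matrix.mul_smul, Matrix.smul_mul, hA',
      ← Algebra.algebraMap_eq_smul_one] at this
  have hbt : ∀ x ∈ spectrum ℝ b, x ≤ t := by
    rw [← le_algebraMap_iff_spectrum_le (ha := hsa), Matrix.le_iff]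
    have := km_conj htA hSi.isHermitian
    rwa [Matrix.mul_sub, Matrix.sub_mul, ← hb, Matrix.mul_smul, Matrix.smul_mul, hA',
      ← Algebra.algebraMap_eq_smul_one] at this
  obtain ⟨h, hh⟩ : ∃ h, h = cfc (fun x : ℝ => 2 * x / (1 + x)) b := ⟨_, rfl⟩
  have e1 : h * (b + 1) = (2:ℝ) • b := by
    have t1 : b + 1 = cfc (fun x : ℝ => x + 1) b := by
      rw [cfc_add_const (1:ℝ) (fun x => x) b (km_contOn _ _) hsa, cfc_id' ℝ b hsa, map_one]
    have t2 : (2:ℝ) • b = cfc (fun x : ℝ => 2 * x) b := by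
      rw [cfc_const_mul (2:ℝ) (fun x => x) b (km_contOn _ _), cfc_id' ℝ b hsa]
    rw [t1, t2, hh, ← cfc_mul _ _ b (km_contOn _ _) (km_contOn _ _)]
    refine cfc_congr fun x hx => ?_
    have := hbs x hx
    have : 1 + x ≠ 0 := by linarith
    field_simp
    ring
  obtain ⟨hbi1, hbi2⟩ := km_inv hbp
  have hAi : A⁻¹ = S⁻¹ * S⁻¹ := by rw [← hSS, Matrix.mul_inv_rev]
  have hBi : B⁻¹ = S⁻¹ * b⁻¹ * S⁻¹ := by
    rw [← hB', Matrix.mul_inv_rev, Matrix.mul_inv_rev, Matrix.mul_assoc]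
  have hH : hmean A B = S * h * S := by
    unfold hmean
    apply Matrix.inv_eq_left_inv
    rw [Matrix.mul_smul, hAi, hBi]
    have : S * h * S * (S⁻¹ * S⁻¹ + S⁻¹ * b⁻¹ * S⁻¹) = S * (h * (b + 1)) * b⁻¹ * S⁻¹ := by
      calc _ = S * h * (S * S⁻¹) * (1 + b⁻¹) * S⁻¹ := by noncomm_ring
        _ = S * h * (b * b⁻¹ + b⁻¹) * S⁻¹ := by rw [hi1, hbi1]; simp
        _ = _ := by noncomm_ring
    rw [this, e1, Matrix.mul_smul, Matrix.smul_mul, Matrix.smul_mul, Matrix.mul_assoc S, hbi1,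
      Matrix.mul_one, hi1, smul_smul]
    norm_num
  set κ := (s + t + 2 * g) / 4 with hκ
  have hpos : (κ • h - (2:ℝ)⁻¹ • (b + g • 1)).PosSemidef := by
    rw [← Matrix.le_iff]
    have t1 : (2:ℝ)⁻¹ • (b + g • 1) = cfc (fun x : ℝ => 2⁻¹ * (x + g)) b := by
      rw [cfc_const_mul (2:ℝ)⁻¹ (fun x => x + g) b (km_contOn _ _),
        cfc_add_const g (fun x => x) b (km_contOn _ _) hsa, cfc_id' ℝ b hsa,
        Algebra.algebraMap_eq_smul_one]
    rw [t1, hh, ← cfc_const_mul κ _ b (km_contOn _ _)]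
    refine cfc_mono (fun x hx => ?_) (km_contOn _ _) (km_contOn _ _)
    have l1 := hbs x hx
    have l2 := hbt x hx
    have l3 : 0 < 1 + x := by linarith
    rw [← mul_div_assoc, le_div_iff₀ l3, hκ]
    nlinarith [mul_nonneg (sub_nonneg.2 l1) (sub_nonneg.2 l2),
      mul_nonneg (sub_nonneg.2 h1) (by linarith : 0 ≤ x),
      mul_nonneg (sub_nonneg.2 h1) (by linarith : 0 ≤ g)]
  have := km_conj hpos hS.isHermitian
  unfold LoewnerLE
  convert this using 1
  rw [hH, ← hSS, ← hB']
  simp only [Matrix.mul_sub, Matrix.sub_mul, Matrix.mul_add, Matrix.add_mul, Matrix.mul_smul,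
    Matrix.smul_mul, Matrix.mul_one]

end KM

theorem klamkin_mclenaghan {n m : Type} [Fintype n] [DecidableEq n] [Fintype m] [DecidableEq m]
    (Φ : Matrix n n ℂ →ₗ[ℂ] Matrix m m ℂ)
    (hΦ : ∀ X : Matrix n n ℂ, X.PosSemidef → (Φ X).PosSemidef)
    (hΦ' : ∀ X : Matrix n n ℂ, X.PosDef → (Φ X).PosDef)
    (f : ℝ → ℝ) (hf : OpMonotone f) (hf' : ∀ x : ℝ, 0 < x → 0 < f x)
    (A B : Matrix n n ℂ) (hA : A.PosDef) (hB : B.PosDef)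
    (s t : ℝ) (hs : 0 < s) (hst : s ≤ t) (h1 : 1 ≤ Real.sqrt (s * t))
    (hsA : LoewnerLE (s • A) B) (htA : LoewnerLE B (t • A))
    (C D E T : Matrix m m ℂ)
    (hC : C = Φ (cfc f (hmean A B)))
    (hD : D = Φ (cfc f (Real.sqrt (s * t) • A)))
    (hE : E = Φ (cfc f B))
    (hT : T = (msqrt C)⁻¹ * D * (msqrt C)⁻¹) :
    LoewnerLE ((msqrt C)⁻¹ * E * (msqrt C)⁻¹ - msqrt C * D⁻¹ * msqrt C)
      (((Real.sqrt s + Real.sqrt t) ^ 2 / 2 - 2) • (1 : Matrix m m ℂ)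
        - (msqrt T - (msqrt T)⁻¹) ^ 2) := by
  obtain ⟨hconv, hnn, hmono⟩ := id hf
  set g := Real.sqrt (s * t) with hg
  have ht : 0 < t := by linarith
  have hgg : g * g = s * t := Real.mul_self_sqrt (by positivity)
  have hsq : (Real.sqrt s + Real.sqrt t) ^ 2 = s + t + 2 * g := by
    rw [hg, Real.sqrt_mul hs.le, add_sq, Real.sq_sqrt hs.le, Real.sq_sqrt ht.le]; ring
  have hκ1 : 1 ≤ (s + t + 2 * g) / 4 := by nlinarith [sq_nonneg (s - t), sq_nonneg (s + t - 2 * g)]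
  have hgA : (g • A).PosDef := hA.smul (by linarith)
  have hH := km_hmean_pd A B hA hB
  have hCp : C.PosDef := hC ▸ hΦ' _ (km_cfc_pd f hf' _ hH)
  have hDp : D.PosDef := hD ▸ hΦ' _ (km_cfc_pd f hf' _ hgA)
  have hEp : E.PosDef := hE ▸ hΦ' _ (km_cfc_pd f hf' _ hB)
  have hm := km_hmean A B hA hB s t g hs h1 hgg hsA htA
  have key : ((2 * ((s + t + 2 * g) / 4)) • C - (E + D)).PosSemidef := by
    refine km_limit C (E + D) _ (fun d hd => ?_) hCp.isHermitian
      (hEp.isHermitian.add hDp.isHermitian)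
    have := hΦ _ (km_comb f hf B (g • A) (hmean A B) hB.posSemidef hgA.posSemidef _ hκ1 hm d hd)
    rw [map_sub, map_add, LinearMap.map_smul_of_tower, ← hC, ← hD, ← hE] at this
    exact this
  obtain ⟨S, hSdef⟩ : ∃ S, S = msqrt C := ⟨_, rfl⟩
  have hS : S.PosDef := hSdef ▸ km_msqrt_pd C hCp
  have hSS : S * S = C := hSdef ▸ km_msqrt_mul C hCp
  rw [← hSdef] at hT ⊢
  obtain ⟨hi1, hi2⟩ := km_inv hS
  have hTp : T.PosDef := hT ▸ km_conj_pd hDp hS.inv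
  obtain ⟨R, hRdef⟩ : ∃ R, R = msqrt T := ⟨_, rfl⟩
  have hR : R.PosDef := hRdef ▸ km_msqrt_pd T hTp
  have hRR : R * R = T := hRdef ▸ km_msqrt_mul T hTp
  rw [← hRdef]
  obtain ⟨hr1, hr2⟩ := km_inv hR
  have hTi : R⁻¹ * R⁻¹ = S * D⁻¹ * S := by
    rw [← Matrix.mul_inv_rev, hRR, hT, Matrix.mul_inv_rev, Matrix.mul_inv_rev,
      Matrix.nonsing_inv_nonsing_inv _ ((Matrix.isUnit_iff_isUnit_det S).1 hS.isUnit),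
      Matrix.mul_assoc]
  have hexp : (R - R⁻¹) ^ 2 = S⁻¹ * D * S⁻¹ - (2:ℝ) • 1 + S * D⁻¹ * S := by
    rw [← hT, ← hTi, ← hRR, sq, Matrix.sub_mul, Matrix.mul_sub, Matrix.mul_sub, hr1, hr2, two_smul]
    abel
  have hCC : S⁻¹ * C * S⁻¹ = 1 := by
    rw [← hSS]
    calc S⁻¹ * (S * S) * S⁻¹ = (S⁻¹ * S) * (S * S⁻¹) := by noncomm_ring
      _ = 1 := by rw [hi1, hi2]; simp
  have fin := km_conj key hS.inv.isHermitian
  unfold LoewnerLE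
  convert fin using 1
  rw [hexp, hsq, Matrix.mul_sub, Matrix.sub_mul, Matrix.mul_smul, Matrix.smul_mul, hCC,
    Matrix.mul_add, Matrix.add_mul]
  module
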